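/- arXiv:2512.13811 — 2 statements merged into one kernel-verified Lean document; each statement's English description precedes it below -/
import Mathlib

section
/- Let n ≥ 5 be an integer. There exists a constant c(n) > 0 with the following property: for every measurable function η : ℝ → [0,1] with η(t) = 1 for all t ≤ 1, every ξ ∈ ℝⁿ and all 0 < ε ≤ r, the function x ↦ η(|x−ξ|/r)² · φ_{(ξ,ε,0)}(x) · w_{(ξ,ε)}(x) is integrable on ℝⁿ and |∫_{ℝⁿ} η(|x−ξ|/r)² · φ_{(ξ,ε,0)}(x) · w_{(ξ,ε)}(x) dx| ≤ c(n) · (ε/r)ⁿ. -/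
open MeasureTheory

/-- `ℝⁿ` as a Euclidean space. -/
abbrev En (n : ℕ) := EuclideanSpace ℝ (Fin n)

/-- The standard bubble `w_{(ξ,λ)}(x) = (2λ/(λ² + |x−ξ|²))^{(n−4)/2}`. -/
noncomputable def bubble (n : ℕ) (ξ : En n) (l : ℝ) (x : En n) : ℝ :=
  (2 * l / (l ^ 2 + ‖x - ξ‖ ^ 2)) ^ (((n : ℝ) - 4) / 2)

/-- `φ_{(ξ,ε,0)}(x) = (2ε/(ε²+|x−ξ|²))^{(n+4)/2} · (|x−ξ|²−ε²)/(|x−ξ|²+ε²)`. -/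
noncomputable def phi0 (n : ℕ) (ξ : En n) (ε : ℝ) (x : En n) : ℝ :=
  (2 * ε / (ε ^ 2 + ‖x - ξ‖ ^ 2)) ^ (((n : ℝ) + 4) / 2) *
    ((‖x - ξ‖ ^ 2 - ε ^ 2) / (‖x - ξ‖ ^ 2 + ε ^ 2))

/-!
The product `φ_{(ξ,ε,0)} · w_{(ξ,ε)}` is radial about `ξ`, and in polar coordinates its density
`tⁿ⁻¹ (2ε/(ε²+t²))ⁿ (t²-ε²)/(t²+ε²)` is the derivative of `-(2εt/(ε²+t²))ⁿ/n`, which vanishes both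
at `0` and at infinity. The product therefore has integral zero over `ℝⁿ`, so multiplying it by a
cutoff which is `1` on the ball of radius `r` changes the integral by at most the integral of its
absolute value outside that ball. There the density is at most `(2ε)ⁿ t⁻ⁿ⁻¹`.
-/

open Set Filter Topology Module

section Cutoff

variable {α F : Type*} [MeasurableSpace α] [NormedAddCommGroup F] [NormedSpace ℝ F]
  {μ : Measure α} {χ : α → ℝ} {f : α → F} {s : Set α}

lemma integrable_cutoff_smul (hf : Integrable f μ) (hχm : AEStronglyMeasurable χ μ)
    (hχ : ∀ x, χ x ∈ Icc (0 : ℝ) 1) : Integrable (fun x => χ x • f x) μ :=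
  hf.bdd_smul 1 hχm <| .of_forall fun x => by
    rw [Real.norm_of_nonneg (hχ x).1]
    exact (hχ x).2

lemma norm_integral_cutoff_smul_le_of_integral_eq_zero (hs : MeasurableSet s)
    (hf : Integrable f μ) (hf0 : ∫ x, f x ∂μ = 0) (hχm : AEStronglyMeasurable χ μ)
    (hχ : ∀ x, χ x ∈ Icc (0 : ℝ) 1) (hχs : ∀ x ∈ s, χ x = 1) :
    ‖∫ x, χ x • f x ∂μ‖ ≤ ∫ x in sᶜ, ‖f x‖ ∂μ := by
  have removed_le (x : α) : ‖χ x • f x - f x‖ ≤ sᶜ.indicator (fun x => ‖f x‖) x := by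
    by_cases hx : x ∈ s
    · simp [hx, hχs x hx]
    · have : |χ x - 1| ≤ 1 := abs_le.2 ⟨by linarith [(hχ x).1], by linarith [(hχ x).2]⟩
      rw [indicator_of_mem (mem_compl hx), show χ x • f x - f x = (χ x - 1) • f x by module,
        norm_smul]
      exact mul_le_of_le_one_left (norm_nonneg _) this
  calc
    ‖∫ x, χ x • f x ∂μ‖ = ‖∫ x, (χ x • f x - f x) ∂μ‖ := by
      rw [integral_sub (integrable_cutoff_smul hf hχm hχ) hf, hf0, sub_zero]
    _ ≤ ∫ x, sᶜ.indicator (fun x => ‖f x‖) x ∂μ :=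
      norm_integral_le_of_norm_le (hf.norm.indicator hs.compl) (.of_forall removed_le)
    _ = ∫ x in sᶜ, ‖f x‖ ∂μ := integral_indicator hs.compl

end Cutoff

/-- The radial profile of `φ_{(ξ,ε,0)} · w_{(ξ,ε)}` on `ℝⁿ`, as a function of `t = |x - ξ|`. The
exponents `(n+4)/2` and `(n-4)/2` of the two factors add up to the natural number `n`. -/
noncomputable def phi0BubbleProfile (n : ℕ) (ε t : ℝ) : ℝ :=
  (2 * ε / (ε ^ 2 + t ^ 2)) ^ n * ((t ^ 2 - ε ^ 2) / (t ^ 2 + ε ^ 2))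

section Profile

variable {n : ℕ} {ε r t : ℝ}

lemma phi0_mul_bubble (hε : 0 < ε) (ξ x : En n) :
    phi0 n ξ ε x * bubble n ξ ε x = phi0BubbleProfile n ε ‖x - ξ‖ := by
  have base_pos : 0 < 2 * ε / (ε ^ 2 + ‖x - ξ‖ ^ 2) := by positivity
  have exponents_add : ((n : ℝ) + 4) / 2 + ((n : ℝ) - 4) / 2 = n := by ring
  rw [phi0, bubble, mul_right_comm, ← Real.rpow_add base_pos, exponents_add, Real.rpow_natCast,
    phi0BubbleProfile]

lemma continuous_phi0BubbleProfile (hε : 0 < ε) : Continuous (phi0BubbleProfile n ε) := by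
  have left_ne (t : ℝ) : ε ^ 2 + t ^ 2 ≠ 0 := by positivity
  have right_ne (t : ℝ) : t ^ 2 + ε ^ 2 ≠ 0 := by positivity
  unfold phi0BubbleProfile
  fun_prop (disch := assumption)

lemma abs_phi0BubbleProfile_le (hε : 0 < ε) (ht : 0 < t) :
    |phi0BubbleProfile n ε t| ≤ (2 * ε / t ^ 2) ^ n := by
  have sign_factor_le : |(t ^ 2 - ε ^ 2) / (t ^ 2 + ε ^ 2)| ≤ 1 := by
    rw [abs_div, abs_of_pos (by positivity : 0 < t ^ 2 + ε ^ 2)]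
    exact div_le_one_of_le₀ (abs_le.2 ⟨by nlinarith, by nlinarith⟩) (by positivity)
  calc
    |phi0BubbleProfile n ε t|
        = (2 * ε / (ε ^ 2 + t ^ 2)) ^ n * |(t ^ 2 - ε ^ 2) / (t ^ 2 + ε ^ 2)| := by
      rw [phi0BubbleProfile, abs_mul, abs_of_nonneg (by positivity)]
    _ ≤ (2 * ε / (ε ^ 2 + t ^ 2)) ^ n := mul_le_of_le_one_right (by positivity) sign_factor_le
    _ ≤ (2 * ε / t ^ 2) ^ n := by
      gcongr
      exact le_add_of_nonneg_left (sq_nonneg ε)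

lemma norm_pow_smul_phi0BubbleProfile_le (hn : n ≠ 0) (hε : 0 < ε) (ht : 0 < t) :
    ‖t ^ (n - 1) • phi0BubbleProfile n ε t‖ ≤ (2 * ε) ^ n * t ^ (-(n : ℝ) - 1) := by
  have pow_eq : t ^ (n - 1) * (2 * ε / t ^ 2) ^ n = (2 * ε) ^ n * t ^ (-(n : ℝ) - 1) := by
    obtain ⟨m, rfl⟩ := Nat.exists_eq_add_one_of_ne_zero hn
    rw [Real.rpow_sub_one ht.ne', Real.rpow_neg ht.le, Real.rpow_natCast, Nat.add_sub_cancel,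
      div_pow]
    field_simp
    ring
  rw [norm_smul, Real.norm_of_nonneg (by positivity), ← pow_eq]
  exact mul_le_mul_of_nonneg_left (abs_phi0BubbleProfile_le hε ht) (by positivity)

lemma hasDerivAt_phi0BubbleProfile_primitive (hn : n ≠ 0) (hε : 0 < ε) (t : ℝ) :
    HasDerivAt (fun t => -((2 * ε * t / (ε ^ 2 + t ^ 2)) ^ n / n))
      (t ^ (n - 1) • phi0BubbleProfile n ε t) t := by
  have denom_ne : ε ^ 2 + t ^ 2 ≠ 0 := by positivity
  have hasDerivAt_base : HasDerivAt (fun t => 2 * ε * t / (ε ^ 2 + t ^ 2))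
      ((2 * ε * (ε ^ 2 + t ^ 2) - 2 * ε * t * (2 * t)) / (ε ^ 2 + t ^ 2) ^ 2) t := by
    simpa using ((hasDerivAt_id t).const_mul (2 * ε)).fun_div
      (((hasDerivAt_id t).fun_pow 2).const_add (ε ^ 2)) denom_ne
  refine ((hasDerivAt_base.fun_pow n).div_const (n : ℝ)).fun_neg.congr_deriv ?_
  obtain ⟨m, rfl⟩ := Nat.exists_eq_add_one_of_ne_zero hn
  rw [phi0BubbleProfile, smul_eq_mul, add_comm (t ^ 2) (ε ^ 2), Nat.add_sub_cancel]
  simp only [div_pow, mul_pow]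
  field_simp
  ring

lemma tendsto_phi0BubbleProfile_primitive_atTop (hn : n ≠ 0) (hε : 0 < ε) :
    Tendsto (fun t : ℝ => -((2 * ε * t / (ε ^ 2 + t ^ 2)) ^ n / n)) atTop (𝓝 0) := by
  have tendsto_majorant : Tendsto (fun t : ℝ => 2 * ε / t) atTop (𝓝 0) :=
    tendsto_const_nhds.div_atTop tendsto_id
  have tendsto_base : Tendsto (fun t : ℝ => 2 * ε * t / (ε ^ 2 + t ^ 2)) atTop (𝓝 0) := by
    refine squeeze_zero' ?_ ?_ tendsto_majorant <;>
      filter_upwards [eventually_gt_atTop 0] with t ht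
    · positivity
    · rw [div_le_div_iff₀ (by positivity) ht]
      nlinarith [pow_pos hε 3]
  simpa [hn] using ((tendsto_base.pow n).div_const (n : ℝ)).neg

lemma integrableOn_Ioi_pow_smul_phi0BubbleProfile (hn : n ≠ 0) (hε : 0 < ε) :
    IntegrableOn (fun t => t ^ (n - 1) • phi0BubbleProfile n ε t) (Ioi 0) := by
  have exponent_lt : -(n : ℝ) - 1 < -1 := by linarith [show 0 < (n : ℝ) by positivity]
  have hcont : Continuous fun t : ℝ => t ^ (n - 1) • phi0BubbleProfile n ε t :=
    (continuous_pow _).smul (continuous_phi0BubbleProfile hε)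
  have near_zero : IntegrableOn (fun t => t ^ (n - 1) • phi0BubbleProfile n ε t) (Ioc 0 1) :=
    hcont.integrableOn_Ioc
  have near_infinity : IntegrableOn (fun t => t ^ (n - 1) • phi0BubbleProfile n ε t) (Ioi 1) :=
    ((integrableOn_Ioi_rpow_of_lt exponent_lt one_pos).const_mul ((2 * ε) ^ n)).mono'
      hcont.aestronglyMeasurable <| ae_restrict_of_forall_mem measurableSet_Ioi fun _ ht =>
        norm_pow_smul_phi0BubbleProfile_le hn hε (one_pos.trans ht)
  rw [← Ioc_union_Ioi_eq_Ioi zero_le_one]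
  exact near_zero.union near_infinity

lemma integral_Ioi_pow_smul_phi0BubbleProfile (hn : n ≠ 0) (hε : 0 < ε) :
    ∫ t in Ioi 0, t ^ (n - 1) • phi0BubbleProfile n ε t = 0 := by
  simpa [hn] using integral_Ioi_of_hasDerivAt_of_tendsto'
    (fun t _ => hasDerivAt_phi0BubbleProfile_primitive hn hε t)
    (integrableOn_Ioi_pow_smul_phi0BubbleProfile hn hε)
    (tendsto_phi0BubbleProfile_primitive_atTop hn hε)

lemma integral_Ioi_norm_pow_smul_phi0BubbleProfile_le (hn : n ≠ 0) (hε : 0 < ε) (hr : 0 < r) :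
    ∫ t in Ioi r, ‖t ^ (n - 1) • phi0BubbleProfile n ε t‖ ≤ (2 * ε / r) ^ n / n := by
  have exponent_lt : -(n : ℝ) - 1 < -1 := by linarith [show 0 < (n : ℝ) by positivity]
  calc
    ∫ t in Ioi r, ‖t ^ (n - 1) • phi0BubbleProfile n ε t‖
        ≤ ∫ t in Ioi r, (2 * ε) ^ n * t ^ (-(n : ℝ) - 1) :=
      setIntegral_mono_on
        ((integrableOn_Ioi_pow_smul_phi0BubbleProfile hn hε).mono_set (Ioi_subset_Ioi hr.le)).norm
        ((integrableOn_Ioi_rpow_of_lt exponent_lt hr).const_mul _) measurableSet_Ioi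
        fun _ ht => norm_pow_smul_phi0BubbleProfile_le hn hε (hr.trans ht)
    _ = (2 * ε / r) ^ n / n := by
      rw [integral_const_mul, integral_Ioi_rpow_of_lt exponent_lt hr, sub_add_cancel,
        neg_div_neg_eq, Real.rpow_neg hr.le, Real.rpow_natCast, div_pow]
      ring

lemma abs_integral_Ioi_pow_smul_cutoff_mul_phi0BubbleProfile_le {χ : ℝ → ℝ} (hχm : Measurable χ)
    (hχ : ∀ t, χ t ∈ Icc (0 : ℝ) 1) (hχr : ∀ t ≤ r, χ t = 1) (hn : n ≠ 0) (hε : 0 < ε)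
    (hr : 0 < r) :
    |∫ t in Ioi 0, t ^ (n - 1) • (χ t * phi0BubbleProfile n ε t)| ≤ (2 * ε / r) ^ n / n :=
  calc
    |∫ t in Ioi 0, t ^ (n - 1) • (χ t * phi0BubbleProfile n ε t)|
        = ‖∫ t in Ioi 0, χ t • t ^ (n - 1) • phi0BubbleProfile n ε t‖ := by
      simp only [Real.norm_eq_abs, smul_eq_mul, mul_left_comm]
    _ ≤ ∫ t in (Iic r)ᶜ, ‖t ^ (n - 1) • phi0BubbleProfile n ε t‖ ∂volume.restrict (Ioi 0) :=
      norm_integral_cutoff_smul_le_of_integral_eq_zero measurableSet_Iic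
        (integrableOn_Ioi_pow_smul_phi0BubbleProfile hn hε)
        (integral_Ioi_pow_smul_phi0BubbleProfile hn hε) hχm.aestronglyMeasurable hχ hχr
    _ = ∫ t in Ioi r, ‖t ^ (n - 1) • phi0BubbleProfile n ε t‖ := by
      rw [compl_Iic, Measure.restrict_restrict measurableSet_Ioi,
        inter_eq_left.2 (Ioi_subset_Ioi hr.le)]
    _ ≤ (2 * ε / r) ^ n / n := integral_Ioi_norm_pow_smul_phi0BubbleProfile_le hn hε hr

end Profile

section Radial

variable {E : Type*} [NormedAddCommGroup E] [NormedSpace ℝ E] [FiniteDimensional ℝ E]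
  [Nontrivial E] [MeasurableSpace E] [BorelSpace E] (μ : Measure E) [μ.IsAddHaarMeasure]
  {χ : ℝ → ℝ} {ε r : ℝ}

lemma integrable_cutoff_mul_phi0BubbleProfile_norm (hχm : Measurable χ)
    (hχ : ∀ t, χ t ∈ Icc (0 : ℝ) 1) (hε : 0 < ε) :
    Integrable (fun x : E => χ ‖x‖ * phi0BubbleProfile (finrank ℝ E) ε ‖x‖) μ :=
  integrable_cutoff_smul
    ((integrable_fun_norm_addHaar μ).2
      (integrableOn_Ioi_pow_smul_phi0BubbleProfile finrank_pos.ne' hε))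
    (hχm.comp measurable_norm).aestronglyMeasurable fun x => hχ ‖x‖

lemma abs_integral_cutoff_mul_phi0BubbleProfile_norm_le (hχm : Measurable χ)
    (hχ : ∀ t, χ t ∈ Icc (0 : ℝ) 1) (hχr : ∀ t ≤ r, χ t = 1) (hε : 0 < ε) (hr : 0 < r) :
    |∫ x : E, χ ‖x‖ * phi0BubbleProfile (finrank ℝ E) ε ‖x‖ ∂μ| ≤
      μ.real (Metric.ball 0 1) * (2 * ε / r) ^ finrank ℝ E := by
  set n := finrank ℝ E with hn_def
  have hn : n ≠ 0 := finrank_pos.ne'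
  calc
    |∫ x : E, χ ‖x‖ * phi0BubbleProfile n ε ‖x‖ ∂μ|
        = n * (μ.real (Metric.ball 0 1) *
            |∫ t in Ioi 0, t ^ (n - 1) • (χ t * phi0BubbleProfile n ε t)|) := by
      rw [integral_fun_norm_addHaar μ fun t => χ t * phi0BubbleProfile n ε t, ← hn_def,
        nsmul_eq_mul, smul_eq_mul, abs_mul, abs_mul, Nat.abs_cast, abs_of_nonneg measureReal_nonneg]
    _ ≤ n * (μ.real (Metric.ball 0 1) * ((2 * ε / r) ^ n / n)) := by
      gcongr
      exact abs_integral_Ioi_pow_smul_cutoff_mul_phi0BubbleProfile_le hχm hχ hχr hn hε hr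
    _ = μ.real (Metric.ball 0 1) * (2 * ε / r) ^ n := by field_simp

end Radial

theorem cutoff_phi0_bubble_estimate_general {n : ℕ} (hn : n ≠ 0) {η : ℝ → ℝ} (hηm : Measurable η)
    (hη : ∀ t, η t ∈ Icc (0 : ℝ) 1) (hη1 : ∀ t ≤ (1 : ℝ), η t = 1) (ξ : En n) {ε r : ℝ}
    (hε : 0 < ε) (hr : 0 < r) :
    Integrable (fun x : En n => η (‖x - ξ‖ / r) ^ 2 * phi0 n ξ ε x * bubble n ξ ε x) ∧
      |∫ x : En n, η (‖x - ξ‖ / r) ^ 2 * phi0 n ξ ε x * bubble n ξ ε x| ≤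
        volume.real (Metric.ball (0 : En n) 1) * 2 ^ n * (ε / r) ^ n := by
  have : NeZero n := ⟨hn⟩
  have hχm : Measurable fun t => η (t / r) ^ 2 :=
    (hηm.comp (measurable_id.div_const r)).pow_const 2
  have hχ (t : ℝ) : η (t / r) ^ 2 ∈ Icc (0 : ℝ) 1 :=
    ⟨sq_nonneg _, pow_le_one₀ (hη _).1 (hη _).2⟩
  have hχr (t : ℝ) (ht : t ≤ r) : η (t / r) ^ 2 = 1 := by
    rw [hη1 _ ((div_le_one hr).2 ht), one_pow]
  have integrable_centered := integrable_cutoff_mul_phi0BubbleProfile_norm (E := En n) volume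
    hχm hχ hε
  have bound_centered := abs_integral_cutoff_mul_phi0BubbleProfile_norm_le (E := En n) volume
    hχm hχ hχr hε hr
  rw [finrank_euclideanSpace_fin] at integrable_centered bound_centered
  simp only [mul_assoc, phi0_mul_bubble hε]
  refine ⟨integrable_centered.comp_sub_right ξ, ?_⟩
  rwa [integral_sub_right_eq_self
      (fun x : En n => η (‖x‖ / r) ^ 2 * phi0BubbleProfile n ε ‖x‖) ξ,
    ← mul_pow, ← mul_div_assoc]

/-- For any cutoff `η : ℝ → [0,1]` with `η ≡ 1` on `(-∞,1]`, the function
`x ↦ η(|x−ξ|/r)²·φ_{(ξ,ε,0)}(x)·w_{(ξ,ε)}(x)` is integrable with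
`|∫| ≤ c(n)·(ε/r)ⁿ`, for `0 < ε ≤ r`. -/
theorem cutoff_phi0_bubble_estimate (n : ℕ) (hn : 5 ≤ n) :
    ∃ c : ℝ, 0 < c ∧
      ∀ η : ℝ → ℝ, Measurable η → (∀ t, η t ∈ Set.Icc (0 : ℝ) 1) →
        (∀ t ≤ (1 : ℝ), η t = 1) →
        ∀ (ξ : En n) (ε r : ℝ), 0 < ε → ε ≤ r →
          Integrable
            (fun x : En n => η (‖x - ξ‖ / r) ^ 2 * phi0 n ξ ε x * bubble n ξ ε x) ∧
          |∫ x : En n, η (‖x - ξ‖ / r) ^ 2 * phi0 n ξ ε x * bubble n ξ ε x|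
            ≤ c * (ε / r) ^ n := by
  have volume_pos : 0 < volume.real (Metric.ball (0 : En n) 1) :=
    ENNReal.toReal_pos (Metric.measure_ball_pos volume 0 one_pos).ne' measure_ball_lt_top.ne
  exact ⟨_, by positivity, fun η hηm hη hη1 ξ ε r hε hr =>
    cutoff_phi0_bubble_estimate_general (by lia) hηm hη hη1 ξ hε (hε.trans_le hr)⟩
end

section
/- Let n ≥ 5 be an integer. There exists a constant c(n) > 0 such that for every ξ ∈ ℝⁿ, all 0 < ε ≤ r, and every k ∈ {0, 1, …, n}, ∫_{B_r(ξ)} w_{(ξ,ε)}(x)^{−8/(n−4)} · φ_{(ξ,ε,k)}(x)² dx ≥ c(n), where B_r(ξ) = {x ∈ ℝⁿ : |x − ξ| < r}. -/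
open MeasureTheory

/-- `φ_{(ξ,ε,k)}(x) = (2ε/(ε²+|x−ξ|²))^{(n+4)/2} · 2ε(x_k−ξ_k)/(|x−ξ|²+ε²)`, for `k = 1,…,n`. -/
noncomputable def phiK (n : ℕ) (ξ : En n) (ε : ℝ) (k : Fin n) (x : En n) : ℝ :=
  (2 * ε / (ε ^ 2 + ‖x - ξ‖ ^ 2)) ^ (((n : ℝ) + 4) / 2) *
    (2 * ε * (x k - ξ k) / (‖x - ξ‖ ^ 2 + ε ^ 2))

/-!
The substitution `x = ξ + ε • y` turns `2ε / (ε² + |x - ξ|²)` into `ε⁻¹ · 2 / (1 + |y|²)` and leaves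
the last factor of `φ_{(ξ,ε,k)}` depending on `y` only. The exponents in `w^(-8/(n-4)) φ²` add up
to `n`, so the powers of `ε` cancel the Jacobian: the integral over `B_r(ξ)` is the integral over
`B_{r/ε}(0)` of a continuous nonnegative function of `y` that does not involve `ξ` or `ε`. It is at
least the integral over the unit ball, which is positive because the function does not vanish
identically there. The constant is the least of these `n + 1` positive numbers.
-/

open Metric Module
open scoped Pointwise

section Integration

theorem setIntegral_pos_of_isOpen {X : Type*} [TopologicalSpace X] [MeasurableSpace X]
    [OpensMeasurableSpace X] {μ : Measure X} [μ.IsOpenPosMeasure] {s : Set X} {f : X → ℝ}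
    (hs : IsOpen s) (hf : ContinuousOn f s) (hfi : IntegrableOn f s μ)
    (hf_nonneg : ∀ x ∈ s, 0 ≤ f x) (hf_ne : ∃ x ∈ s, f x ≠ 0) : 0 < ∫ x in s, f x ∂μ := by
  have hf_nonneg_ae : 0 ≤ᵐ[μ.restrict s] f := ae_restrict_of_forall_mem hs.measurableSet hf_nonneg
  rw [setIntegral_pos_iff_support_of_nonneg_ae hf_nonneg_ae hfi, Set.inter_comm]
  exact (hf.isOpen_inter_preimage hs isOpen_ne).measure_pos μ hf_ne

variable {E : Type*} [NormedAddCommGroup E] [NormedSpace ℝ E] [FiniteDimensional ℝ E]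
  [MeasurableSpace E] [BorelSpace E] (μ : Measure E) [μ.IsAddHaarMeasure]

theorem setIntegral_ball_comp_inv_smul_sub {F : Type*} [NormedAddCommGroup F] [NormedSpace ℝ F]
    (f : E → F) (ξ : E) {ε : ℝ} (hε : 0 < ε) (r : ℝ) :
    ∫ x in ball ξ r, f (ε⁻¹ • (x - ξ)) ∂μ = ε ^ finrank ℝ E • ∫ y in ball 0 (r / ε), f y ∂μ := by
  have hpreimage : (· - ξ) ⁻¹' ball 0 r = ball ξ r := by
    ext x
    simp only [Set.mem_preimage, mem_ball_iff_norm, sub_zero]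
  have hsmul : ε⁻¹ • ball (0 : E) r = ball 0 (r / ε) := by
    rw [_root_.smul_ball (inv_ne_zero hε.ne'), smul_zero, Real.norm_of_nonneg (inv_nonneg.2 hε.le),
      div_eq_inv_mul]
  rw [← hpreimage, (measurePreserving_sub_right μ ξ).setIntegral_preimage_emb
    (measurableEmbedding_subRight ξ) (fun z => f (ε⁻¹ • z)),
    Measure.setIntegral_comp_smul_of_pos μ f _ (inv_pos.2 hε), hsmul, inv_pow, inv_inv]

theorem setIntegral_unitBall_le_setIntegral_ball_rescaled {f : E → ℝ} (hf : LocallyIntegrable f μ)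
    (hf_nonneg : 0 ≤ f) (ξ : E) {ε r : ℝ} (hε : 0 < ε) (hr : ε ≤ r) :
    ∫ y in ball 0 1, f y ∂μ ≤
      ∫ x in ball ξ r, (ε ^ finrank ℝ E)⁻¹ * f (ε⁻¹ • (x - ξ)) ∂μ := by
  have := FiniteDimensional.proper_real E
  rw [integral_const_mul, setIntegral_ball_comp_inv_smul_sub μ f ξ hε, smul_eq_mul,
    inv_mul_cancel_left₀ (pow_pos hε _).ne']
  exact setIntegral_mono_set
    ((hf.integrableOn_isCompact (isCompact_closedBall 0 _)).mono_set ball_subset_closedBall)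
    (.of_forall hf_nonneg) (ball_subset_ball ((one_le_div hε).2 hr)).eventuallyLE

end Integration

section Stereographic

/-- The conformal factor of inverse stereographic projection onto the unit sphere: the round metric
in the chart is its square times the flat metric. -/
noncomputable def conformalFactor {E : Type*} [NormedAddCommGroup E] (y : E) : ℝ :=
  2 / (1 + ‖y‖ ^ 2)

variable {ι : Type*} [Fintype ι]

/-- The coordinates of the inverse stereographic projection of `y` as a point of the unit sphere in
`ℝ × ℝ^ι`. The index `none` is the axis of projection, so that `none` and `some k` correspond to
the indices `0` and `k` of `φ_{(ξ,ε,k)}`. -/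
noncomputable def sphereCoord : Option ι → EuclideanSpace ℝ ι → ℝ
  | none, y => (‖y‖ ^ 2 - 1) / (‖y‖ ^ 2 + 1)
  | some k, y => 2 * y k / (‖y‖ ^ 2 + 1)

/-- The square of a coordinate function of the sphere times the volume density of the round metric,
in the stereographic chart. -/
noncomputable def sphereCoordDensity (k : Option ι) (y : EuclideanSpace ℝ ι) : ℝ :=
  conformalFactor y ^ Fintype.card ι * sphereCoord k y ^ 2

theorem conformalFactor_pos {E : Type*} [NormedAddCommGroup E] (y : E) :
    0 < conformalFactor y := by
  unfold conformalFactor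
  positivity

theorem continuous_conformalFactor {E : Type*} [NormedAddCommGroup E] :
    Continuous (conformalFactor : E → ℝ) := by
  unfold conformalFactor
  fun_prop (disch := intro; positivity)

theorem continuous_sphereCoord (k : Option ι) : Continuous (sphereCoord k) := by
  cases k <;> unfold sphereCoord <;> fun_prop (disch := intro; positivity)

theorem exists_mem_unitBall_sphereCoord_ne_zero (k : Option ι) :
    ∃ y ∈ ball (0 : EuclideanSpace ℝ ι) 1, sphereCoord k y ≠ 0 := by
  classical
  cases k with
  | none => exact ⟨0, mem_ball_self one_pos, by simp [sphereCoord]⟩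
  | some k =>
    refine ⟨PiLp.single 2 k (1 / 2), ?_, ?_⟩
    · norm_num [PiLp.norm_single]
    · norm_num [sphereCoord, PiLp.norm_single]

theorem continuous_sphereCoordDensity (k : Option ι) : Continuous (sphereCoordDensity k) :=
  (continuous_conformalFactor.pow _).mul ((continuous_sphereCoord k).pow 2)

theorem sphereCoordDensity_nonneg (k : Option ι) : 0 ≤ sphereCoordDensity k := fun y =>
  mul_nonneg (pow_pos (conformalFactor_pos y) _).le (sq_nonneg _)

theorem setIntegral_unitBall_sphereCoordDensity_pos (k : Option ι) :
    0 < ∫ y in ball 0 1, sphereCoordDensity k y := by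
  have hcont := continuous_sphereCoordDensity k
  obtain ⟨y, hy, hy_ne⟩ := exists_mem_unitBall_sphereCoord_ne_zero k
  exact setIntegral_pos_of_isOpen isOpen_ball hcont.continuousOn
    ((hcont.locallyIntegrable.integrableOn_isCompact (isCompact_closedBall 0 1)).mono_set
      ball_subset_closedBall)
    (fun y _ => sphereCoordDensity_nonneg k y)
    ⟨y, hy, mul_ne_zero (pow_pos (conformalFactor_pos y) _).ne' (pow_ne_zero 2 hy_ne)⟩

end Stereographic

section Rescaling

theorem rpow_rpow_mul_rpow_sq {u d : ℝ} (hu : 0 < u) (hd : d ≠ 4) :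
    (u ^ ((d - 4) / 2)) ^ (-(8 / (d - 4))) * (u ^ ((d + 4) / 2)) ^ 2 = u ^ d := by
  have hd' : d - 4 ≠ 0 := sub_ne_zero.2 hd
  rw [← Real.rpow_mul hu.le, ← Real.rpow_mul_natCast hu.le, ← Real.rpow_add hu]
  congr 1
  field_simp
  push_cast
  ring

theorem div_sq_add_norm_sq_eq_inv_mul_conformalFactor {E : Type*} [NormedAddCommGroup E]
    [NormedSpace ℝ E] {ε : ℝ} (hε : 0 < ε) (z : E) :
    2 * ε / (ε ^ 2 + ‖z‖ ^ 2) = ε⁻¹ * conformalFactor (ε⁻¹ • z) := by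
  rw [conformalFactor, norm_smul, Real.norm_of_nonneg (inv_nonneg.2 hε.le)]
  field_simp

variable {n : ℕ} {ε : ℝ}

theorem bubble_eq_rpow_conformalFactor (hε : 0 < ε) (ξ x : En n) :
    bubble n ξ ε x = (ε⁻¹ * conformalFactor (ε⁻¹ • (x - ξ))) ^ (((n : ℝ) - 4) / 2) := by
  rw [bubble, div_sq_add_norm_sq_eq_inv_mul_conformalFactor hε]

theorem phi0_eq_rpow_conformalFactor_mul_sphereCoord (hε : 0 < ε) (ξ x : En n) :
    phi0 n ξ ε x = (ε⁻¹ * conformalFactor (ε⁻¹ • (x - ξ))) ^ (((n : ℝ) + 4) / 2) *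
      sphereCoord none (ε⁻¹ • (x - ξ)) := by
  rw [phi0, div_sq_add_norm_sq_eq_inv_mul_conformalFactor hε, sphereCoord, norm_smul,
    Real.norm_of_nonneg (inv_nonneg.2 hε.le)]
  field_simp

theorem phiK_eq_rpow_conformalFactor_mul_sphereCoord (hε : 0 < ε) (ξ x : En n) (k : Fin n) :
    phiK n ξ ε k x = (ε⁻¹ * conformalFactor (ε⁻¹ • (x - ξ))) ^ (((n : ℝ) + 4) / 2) *
      sphereCoord (some k) (ε⁻¹ • (x - ξ)) := by
  rw [phiK, div_sq_add_norm_sq_eq_inv_mul_conformalFactor hε, sphereCoord, norm_smul,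
    Real.norm_of_nonneg (inv_nonneg.2 hε.le), PiLp.smul_apply, PiLp.sub_apply, smul_eq_mul]
  field_simp

theorem bubble_rpow_mul_sq_eq_sphereCoordDensity (hn : n ≠ 4) (hε : 0 < ε) (ξ x : En n)
    (k : Option (Fin n)) :
    bubble n ξ ε x ^ (-((8 : ℝ) / ((n : ℝ) - 4))) *
        ((ε⁻¹ * conformalFactor (ε⁻¹ • (x - ξ))) ^ (((n : ℝ) + 4) / 2) *
          sphereCoord k (ε⁻¹ • (x - ξ))) ^ 2 =
      (ε ^ n)⁻¹ * sphereCoordDensity k (ε⁻¹ • (x - ξ)) := by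
  have hpos : 0 < ε⁻¹ * conformalFactor (ε⁻¹ • (x - ξ)) :=
    mul_pos (inv_pos.2 hε) (conformalFactor_pos _)
  rw [bubble_eq_rpow_conformalFactor hε, mul_pow, ← mul_assoc,
    rpow_rpow_mul_rpow_sq hpos (mod_cast hn), Real.rpow_natCast, mul_pow, inv_pow, mul_assoc,
    sphereCoordDensity, Fintype.card_fin]

end Rescaling

theorem phi_weighted_lower_bound_general (n : ℕ) (hn : n ≠ 4) :
    ∃ c : ℝ, 0 < c ∧
      ∀ (ξ : En n) (ε r : ℝ), 0 < ε → ε ≤ r →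
        (c ≤ ∫ x in Metric.ball ξ r,
            bubble n ξ ε x ^ (-((8 : ℝ) / ((n : ℝ) - 4))) * phi0 n ξ ε x ^ 2) ∧
        (∀ k : Fin n,
          c ≤ ∫ x in Metric.ball ξ r,
            bubble n ξ ε x ^ (-((8 : ℝ) / ((n : ℝ) - 4))) * phiK n ξ ε k x ^ 2) := by
  obtain ⟨m, hm⟩ := Finite.exists_min
    fun k : Option (Fin n) => ∫ y in ball 0 1, sphereCoordDensity k y
  refine ⟨_, setIntegral_unitBall_sphereCoordDensity_pos m, fun ξ ε r hε hr => ?_⟩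
  have hbound (k : Option (Fin n)) : ∫ y in ball 0 1, sphereCoordDensity m y ≤
      ∫ x in ball ξ r, (ε ^ n)⁻¹ * sphereCoordDensity k (ε⁻¹ • (x - ξ)) := by
    refine (hm k).trans ?_
    simpa only [finrank_euclideanSpace_fin] using
      setIntegral_unitBall_le_setIntegral_ball_rescaled volume
        (continuous_sphereCoordDensity k).locallyIntegrable (sphereCoordDensity_nonneg k) ξ hε hr
  refine ⟨?_, fun k => ?_⟩
  · simpa only [phi0_eq_rpow_conformalFactor_mul_sphereCoord hε,
      bubble_rpow_mul_sq_eq_sphereCoordDensity hn hε] using hbound none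
  · simpa only [phiK_eq_rpow_conformalFactor_mul_sphereCoord hε,
      bubble_rpow_mul_sq_eq_sphereCoordDensity hn hε] using hbound (some k)

/-- Lower bound: `∫_{B_r(ξ)} w_{(ξ,ε)}^{−8/(n−4)}·φ_{(ξ,ε,k)}² ≥ c(n) > 0`
for all `k ∈ {0,1,…,n}` and `0 < ε ≤ r`. -/
theorem phi_weighted_lower_bound (n : ℕ) (hn : 5 ≤ n) :
    ∃ c : ℝ, 0 < c ∧
      ∀ (ξ : En n) (ε r : ℝ), 0 < ε → ε ≤ r →
        (c ≤ ∫ x in Metric.ball ξ r,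
            bubble n ξ ε x ^ (-((8 : ℝ) / ((n : ℝ) - 4))) * phi0 n ξ ε x ^ 2) ∧
        (∀ k : Fin n,
          c ≤ ∫ x in Metric.ball ξ r,
            bubble n ξ ε x ^ (-((8 : ℝ) / ((n : ℝ) - 4))) * phiK n ξ ε k x ^ 2) := by
  exact phi_weighted_lower_bound_general n (by omega)
end
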